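/- For every ℓ ≥ 2, the number of 321-avoiding alternating (up-down) permutations of length 2ℓ that begin with their smallest entry (i.e., w_1 = 1) is the Catalan number C_ℓ. -/

import Mathlib

/-- `w` is an alternating (up-down) permutation: `w 0 < w 1 > w 2 < ⋯`. -/
def UpDown {n : ℕ} (w : Equiv.Perm (Fin n)) : Prop :=
  ∀ i : ℕ, ∀ h : i + 1 < n,
    if i % 2 = 0 then w ⟨i, Nat.lt_of_succ_lt h⟩ < w ⟨i + 1, h⟩
    else w ⟨i + 1, h⟩ < w ⟨i, Nat.lt_of_succ_lt h⟩

/-- `w` is a reverse-alternating (down-up) permutation: `w 0 > w 1 < w 2 > ⋯`. -/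
def DownUp {n : ℕ} (w : Equiv.Perm (Fin n)) : Prop :=
  ∀ i : ℕ, ∀ h : i + 1 < n,
    if i % 2 = 0 then w ⟨i + 1, h⟩ < w ⟨i, Nat.lt_of_succ_lt h⟩
    else w ⟨i, Nat.lt_of_succ_lt h⟩ < w ⟨i + 1, h⟩

/-- The set of occurrences of the pattern 321 in `w`. -/
def occ321 {n : ℕ} (w : Equiv.Perm (Fin n)) : Set (Fin n × Fin n × Fin n) :=
  {t | t.1 < t.2.1 ∧ t.2.1 < t.2.2 ∧ w t.2.2 < w t.2.1 ∧ w t.2.1 < w t.1}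

/-- The set of occurrences of the pattern 123 in `w`. -/
def occ123 {n : ℕ} (w : Equiv.Perm (Fin n)) : Set (Fin n × Fin n × Fin n) :=
  {t | t.1 < t.2.1 ∧ t.2.1 < t.2.2 ∧ w t.1 < w t.2.1 ∧ w t.2.1 < w t.2.2}

/-
The letters of an up-down 321-avoiding word increase along the descent positions `1, 3, 5, …` and,
once the word starts with its smallest letter, along the remaining positions as well. Conversely, a
word made of two increasing subsequences cannot contain the pattern 321. Lowering every letter by
one, cyclically, moves the initial smallest letter to the end of the sequence of descent letters.
The two sequences then have the same length and form the rows of a standard Young tableau of shape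
`(ℓ, ℓ)`, whose column conditions are exactly the descents. Recording the row that contains each
number turns such tableaux into Dyck words, because the column conditions say that every initial
segment contains at least as many numbers from the first row as from the second.
-/

open DyckStep Finset

section RowStep

variable {m n N : ℕ}

theorem forall_le_iff_card_filter_lt_le {α : Type*} [LinearOrder α] {f g : Fin n → α}
    (hf : StrictMono f) (hg : Monotone g) :
    (∀ i, f i ≤ g i) ↔ ∀ x, #{i | g i < x} ≤ #{i | f i < x} := by
  refine ⟨fun h x => card_le_card (monotone_filter_right _ fun i _ => (h i).trans_lt), ?_⟩
  intro h i
  by_contra! hlt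
  have hg_card : #(Iic i) ≤ #{j | g j < f i} :=
    card_le_card fun j hj => by simpa using (hg (mem_Iic.1 hj)).trans_lt hlt
  have hf_card : #{j | f j < f i} = #(Iio i) := by
    congr 1
    ext j
    simp [hf.lt_iff_lt]
  have := hg_card.trans (h (f i))
  rw [hf_card, Fin.card_Iic, Fin.card_Iio] at this
  omega

theorem count_take_ofFn {α : Type*} [DecidableEq α] (f : Fin n → α) (x : α) (k : ℕ) :
    ((List.ofFn f).take k).count x = #{v : Fin n | f v = x ∧ (v : ℕ) < k} := by
  induction n generalizing k with
  | zero => simp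
  | succ n ih =>
    cases k with
    | zero => simp
    | succ k =>
      simp only [List.ofFn_succ, List.take_succ_cons, List.count_cons, ih, beq_iff_eq,
        Fin.card_filter_univ_succ, Fin.val_succ, Fin.val_zero, Nat.succ_lt_succ_iff,
        Nat.succ_pos, and_true]
      split_ifs <;> rfl

/-- For a filling `T` of two rows of cells by the numbers `0, …, N - 1`, the step attached to each
number: `U` if it lies in the first row, `D` if it lies in the second. -/
def rowStep (T : Fin m ⊕ Fin n ≃ Fin N) (v : Fin N) : DyckStep :=
  (T.symm v).elim (fun _ => U) (fun _ => D)

theorem rowStep_eq_U_iff (T : Fin m ⊕ Fin n ≃ Fin N) (v : Fin N) :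
    rowStep T v = U ↔ v ∈ Set.range (T ∘ Sum.inl) := by
  obtain ⟨c | c, rfl⟩ := T.surjective v <;> simp [rowStep]

theorem rowStep_eq_D_iff (T : Fin m ⊕ Fin n ≃ Fin N) (v : Fin N) :
    rowStep T v = D ↔ v ∈ Set.range (T ∘ Sum.inr) := by
  obtain ⟨c | c, rfl⟩ := T.surjective v <;> simp [rowStep]

theorem card_rowStep_eq_U (T : Fin m ⊕ Fin n ≃ Fin N) (k : ℕ) :
    #{v | rowStep T v = U ∧ (v : ℕ) < k} = #{i | (T (Sum.inl i) : ℕ) < k} := by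
  simp only [card_filter, ← T.sum_comp, Fintype.sum_sum_type]
  simp [rowStep]

theorem card_rowStep_eq_D (T : Fin m ⊕ Fin n ≃ Fin N) (k : ℕ) :
    #{v | rowStep T v = D ∧ (v : ℕ) < k} = #{i | (T (Sum.inr i) : ℕ) < k} := by
  simp only [card_filter, ← T.sum_comp, Fintype.sum_sum_type]
  simp [rowStep]

theorem eq_of_rowStep_eq {T T' : Fin m ⊕ Fin n ≃ Fin N}
    (hinl : StrictMono (T ∘ Sum.inl)) (hinr : StrictMono (T ∘ Sum.inr))
    (hinl' : StrictMono (T' ∘ Sum.inl)) (hinr' : StrictMono (T' ∘ Sum.inr))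
    (h : rowStep T = rowStep T') : T = T' := by
  have eq_inl : T ∘ Sum.inl = T' ∘ Sum.inl := (hinl.range_inj hinl').1 <| by
    ext v
    rw [← rowStep_eq_U_iff, ← rowStep_eq_U_iff, h]
  have eq_inr : T ∘ Sum.inr = T' ∘ Sum.inr := (hinr.range_inj hinr').1 <| by
    ext v
    rw [← rowStep_eq_D_iff, ← rowStep_eq_D_iff, h]
  ext (i | i)
  · exact congrArg Fin.val (congrFun eq_inl i)
  · exact congrArg Fin.val (congrFun eq_inr i)

theorem exists_rowStep_eq (f : Fin N → DyckStep) (hm : #{v | f v = U} = m)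
    (hn : #{v | f v = D} = n) :
    ∃ T : Fin m ⊕ Fin n ≃ Fin N,
      StrictMono (T ∘ Sum.inl) ∧ StrictMono (T ∘ Sum.inr) ∧ rowStep T = f := by
  have hcompl : ({v | f v = U} : Finset (Fin N))ᶜ = ({v | f v = D} : Finset (Fin N)) := by
    ext v
    cases h : f v <;> simp [h]
  have hn' : #({v | f v = U} : Finset (Fin N))ᶜ = n := hcompl ▸ hn
  let T := finSumEquivOfFinset hm hn'
  refine ⟨T, (orderEmbOfFin _ hm).strictMono, (orderEmbOfFin _ hn').strictMono, funext fun v => ?_⟩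
  obtain ⟨i | i, rfl⟩ := T.surjective v
  · have hi : T (Sum.inl i) ∈ ({v | f v = U} : Finset (Fin N)) := orderEmbOfFin_mem _ hm _
    simpa [rowStep] using (mem_filter.1 hi).2.symm
  · have hi : T (Sum.inr i) ∈ ({v | f v = U} : Finset (Fin N))ᶜ := orderEmbOfFin_mem _ hn' _
    rw [hcompl] at hi
    simpa [rowStep] using (mem_filter.1 hi).2.symm

end RowStep

section StandardTableau

variable {l : ℕ}

/-- A standard Young tableau of shape `(l, l)`, given as a filling of the two rows of cells by
`0, …, 2 * l - 1`: its rows and columns increase. -/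
structure IsStandard (T : Fin l ⊕ Fin l ≃ Fin (2 * l)) : Prop where
  strictMono_inl : StrictMono (T ∘ Sum.inl)
  strictMono_inr : StrictMono (T ∘ Sum.inr)
  inl_lt_inr (i : Fin l) : T (Sum.inl i) < T (Sum.inr i)

theorem IsStandard.le_inr_last {T : Fin l ⊕ Fin l ≃ Fin (2 * l)} (hT : IsStandard T) (hl : 0 < l)
    (c : Fin l ⊕ Fin l) : T c ≤ T (Sum.inr ⟨l - 1, Nat.sub_one_lt_of_lt hl⟩) := by
  have inr_le (i : Fin l) : T (Sum.inr i) ≤ T (Sum.inr ⟨l - 1, Nat.sub_one_lt_of_lt hl⟩) :=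
    hT.strictMono_inr.monotone (Fin.le_def.2 (Nat.le_sub_one_of_lt i.isLt))
  obtain i | i := c
  · exact (hT.inl_lt_inr i).le.trans (inr_le i)
  · exact inr_le i

theorem forall_inl_lt_inr_iff_count_le {T : Fin l ⊕ Fin l ≃ Fin (2 * l)}
    (hinl : StrictMono (T ∘ Sum.inl)) (hinr : StrictMono (T ∘ Sum.inr)) :
    (∀ i, T (Sum.inl i) < T (Sum.inr i)) ↔
      ∀ k, ((List.ofFn (rowStep T)).take k).count D ≤
        ((List.ofFn (rowStep T)).take k).count U := by
  have hne (i : Fin l) : T (Sum.inl i) ≠ T (Sum.inr i) := T.injective.ne Sum.inl_ne_inr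
  simp only [count_take_ofFn, card_rowStep_eq_U, card_rowStep_eq_D]
  rw [← forall_le_iff_card_filter_lt_le (f := fun i => (T (Sum.inl i) : ℕ))
    (g := fun i => (T (Sum.inr i) : ℕ)) (fun _ _ h => hinl h) (fun _ _ h => hinr.monotone h)]
  exact forall_congr' fun i => ((hne i).le_iff_lt).symm

theorem count_ofFn_rowStep (T : Fin l ⊕ Fin l ≃ Fin (2 * l)) :
    (List.ofFn (rowStep T)).count U = l ∧ (List.ofFn (rowStep T)).count D = l := by
  rw [← List.take_length (l := List.ofFn (rowStep T)), List.length_ofFn, count_take_ofFn,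
    count_take_ofFn, card_rowStep_eq_U, card_rowStep_eq_D]
  simp

/-- The Dyck word of a standard tableau: the `v`-th step is `U` or `D` according to the row
containing `v`. -/
def IsStandard.toDyckWord {T : Fin l ⊕ Fin l ≃ Fin (2 * l)} (hT : IsStandard T) : DyckWord where
  toList := List.ofFn (rowStep T)
  count_U_eq_count_D := (count_ofFn_rowStep T).1.trans (count_ofFn_rowStep T).2.symm
  count_D_le_count_U :=
    (forall_inl_lt_inr_iff_count_le hT.strictMono_inl hT.strictMono_inr).1 hT.inl_lt_inr

theorem exists_toDyckWord_eq (p : DyckWord) (hp : p.semilength = l) :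
    ∃ (T : Fin l ⊕ Fin l ≃ Fin (2 * l)) (hT : IsStandard T), hT.toDyckWord = p := by
  obtain ⟨f, hf⟩ : ∃ f : Fin (2 * l) → DyckStep, List.ofFn f = p.toList := by
    rw [← hp, p.two_mul_semilength_eq_length]
    exact ⟨_, List.ofFn_get _⟩
  have card_eq (x : DyckStep) : #{v | f v = x} = p.toList.count x := by
    rw [← hf, ← List.take_length (l := List.ofFn f), List.length_ofFn, count_take_ofFn]
    simp
  obtain ⟨T, hinl, hinr, rfl⟩ := exists_rowStep_eq f ((card_eq U).trans hp)
    ((card_eq D).trans (p.semilength_eq_count_D.symm.trans hp))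
  have hcol := (forall_inl_lt_inr_iff_count_le hinl hinr).2 (hf ▸ p.count_D_le_count_U)
  exact ⟨T, ⟨hinl, hinr, hcol⟩, DyckWord.ext hf⟩

theorem card_isStandard (l : ℕ) :
    Nat.card {T : Fin l ⊕ Fin l ≃ Fin (2 * l) // IsStandard T} = catalan l := by
  let toDyck (T : {T : Fin l ⊕ Fin l ≃ Fin (2 * l) // IsStandard T}) :
      {p : DyckWord // p.semilength = l} := ⟨T.2.toDyckWord, (count_ofFn_rowStep T.1).1⟩
  have hbij : Function.Bijective toDyck := by
    constructor
    · rintro ⟨T, hT⟩ ⟨T', hT'⟩ h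
      have hstep : rowStep T = rowStep T' :=
        List.ofFn_injective (congrArg (fun p => p.1.toList) h)
      exact Subtype.ext (eq_of_rowStep_eq hT.strictMono_inl hT.strictMono_inr
        hT'.strictMono_inl hT'.strictMono_inr hstep)
    · rintro ⟨p, hp⟩
      obtain ⟨T, hT, rfl⟩ := exists_toDyckWord_eq p hp
      exact ⟨⟨T, hT⟩, rfl⟩
  rw [Nat.card_congr (Equiv.ofBijective toDyck hbij), Nat.card_eq_fintype_card,
    DyckWord.card_dyckWord_semilength_eq_catalan]

end StandardTableau

section Permutation

variable {n : ℕ} {w : Equiv.Perm (Fin n)}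

/-- The positions `p` at which every up-down word of length `n` has a descent `w p > w (p + 1)`
(positions are numbered from `0`). -/
def descentPositions (n : ℕ) : Set (Fin n) :=
  {p | (p : ℕ) % 2 = 1 ∧ (p : ℕ) + 1 < n}

theorem occ321_eq_empty_iff :
    occ321 w = ∅ ↔ ∀ i j k, i < j → j < k → w k < w j → ¬ w j < w i := by
  simp [occ321, Set.eq_empty_iff_forall_notMem]

theorem occ321_eq_empty_of_strictMonoOn {s : Set (Fin n)} (hs : StrictMonoOn w s)
    (hsc : StrictMonoOn w sᶜ) : occ321 w = ∅ := by
  rw [occ321_eq_empty_iff]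
  intro i j k hij hjk hkj hji
  have not_both_mem {p q : Fin n} (hpq : p < q) (hqp : w q < w p) : ¬ (p ∈ s ↔ q ∈ s) := by
    intro h
    by_cases hp : p ∈ s
    · exact (hs hp (h.1 hp) hpq).not_gt hqp
    · exact (hsc hp (mt h.2 hp) hpq).not_gt hqp
  have := not_both_mem hij hji
  have := not_both_mem hjk hkj
  have := not_both_mem (hij.trans hjk) (hkj.trans hji)
  tauto

theorem coe_apply_eq_zero_iff {hn : 0 < n} (h0 : w ⟨0, hn⟩ = ⟨0, hn⟩) {p : Fin n} :
    (w p : ℕ) = 0 ↔ (p : ℕ) = 0 := by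
  simpa only [h0, Fin.ext_iff] using w.apply_eq_iff_eq (x := p) (y := ⟨0, hn⟩)

theorem apply_lt_apply_of_coe_eq_zero {hn : 0 < n} (h0 : w ⟨0, hn⟩ = ⟨0, hn⟩) {p q : Fin n}
    (hp : (p : ℕ) = 0) (hpq : p < q) : w p < w q := by
  have hq : (w q : ℕ) ≠ 0 := (coe_apply_eq_zero_iff h0).not.2 (by omega)
  rw [Fin.lt_def, (coe_apply_eq_zero_iff h0).2 hp]
  exact Nat.pos_of_ne_zero hq

theorem UpDown.lt_of_mod_two_eq_one (hw : UpDown w) {p q : Fin n} (hp : (p : ℕ) % 2 = 1)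
    (hpq : (q : ℕ) = p + 1) : w q < w p := by
  obtain ⟨q, hq⟩ := q
  subst hpq
  simpa [hp] using hw p hq

theorem UpDown.strictMonoOn_descentPositions (hw : UpDown w) (h321 : occ321 w = ∅) :
    StrictMonoOn w (descentPositions n) := by
  rintro p - q ⟨hq, hq_succ⟩ hpq
  have hdescent : w ⟨q + 1, hq_succ⟩ < w q := hw.lt_of_mod_two_eq_one hq rfl
  by_contra! hle
  exact occ321_eq_empty_iff.1 h321 p q ⟨q + 1, hq_succ⟩ hpq (Nat.lt_succ_self q) hdescent
    (hle.lt_of_ne (w.injective.ne hpq.ne'))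

theorem UpDown.lt_of_mod_two_eq_zero_of_pos (hw : UpDown w) (h321 : occ321 w = ∅) {p q : Fin n}
    (hp : (p : ℕ) % 2 = 0) (hp_pos : 0 < (p : ℕ)) (hpq : p < q) : w p < w q := by
  have hprev_lt : (⟨p - 1, by omega⟩ : Fin n) < p := Fin.lt_def.2 (Nat.sub_lt hp_pos one_pos)
  have hdescent : w p < w ⟨p - 1, by omega⟩ :=
    hw.lt_of_mod_two_eq_one (by simp only; omega) (by simp only; omega)
  by_contra! hle
  exact occ321_eq_empty_iff.1 h321 _ p q hprev_lt hpq (hle.lt_of_ne (w.injective.ne hpq.ne'))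
    hdescent

theorem UpDown.strictMonoOn_compl_descentPositions (hw : UpDown w) (h321 : occ321 w = ∅)
    (hn : 0 < n) (h0 : w ⟨0, hn⟩ = ⟨0, hn⟩) : StrictMonoOn w (descentPositions n)ᶜ := by
  rintro p hp q - hpq
  obtain hp_zero | hp_pos := Nat.eq_zero_or_pos (p : ℕ)
  · exact apply_lt_apply_of_coe_eq_zero h0 hp_zero hpq
  · have hp_even : (p : ℕ) % 2 = 0 := by
      simp only [descentPositions, Set.mem_compl_iff, Set.mem_ofPred_eq] at hp
      omega
    exact hw.lt_of_mod_two_eq_zero_of_pos h321 hp_even hp_pos hpq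

theorem upDown_of_strictMonoOn (hcompl : StrictMonoOn w (descentPositions n)ᶜ)
    (hdescent : ∀ p (hp : p ∈ descentPositions n), w ⟨p + 1, hp.2⟩ < w p) : UpDown w := by
  intro p hp
  split_ifs with heven
  · have hp_mem : (⟨p, by omega⟩ : Fin n) ∈ (descentPositions n)ᶜ := by
      simp [descentPositions, heven]
    by_cases hp_succ : (⟨p + 1, hp⟩ : Fin n) ∈ descentPositions n
    · have hp_add_two : (⟨p + 1 + 1, hp_succ.2⟩ : Fin n) ∈ (descentPositions n)ᶜ := by
        simp only [descentPositions, Set.mem_compl_iff, Set.mem_ofPred_eq]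
        omega
      calc
        w ⟨p, by omega⟩ < w ⟨p + 1 + 1, hp_succ.2⟩ :=
          hcompl hp_mem hp_add_two (Fin.lt_def.2 (by simp only; omega))
        _ < w ⟨p + 1, hp⟩ := hdescent _ hp_succ
    · exact hcompl hp_mem hp_succ (Fin.lt_def.2 (Nat.lt_succ_self p))
  · exact hdescent ⟨p, by omega⟩ ⟨Nat.mod_two_ne_zero.1 heven, hp⟩

theorem upDown_and_occ321_eq_empty_iff (hn : 0 < n) (h0 : w ⟨0, hn⟩ = ⟨0, hn⟩) :
    UpDown w ∧ occ321 w = ∅ ↔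
      StrictMonoOn w (descentPositions n)ᶜ ∧ StrictMonoOn w (descentPositions n) ∧
        ∀ p (hp : p ∈ descentPositions n), w ⟨p + 1, hp.2⟩ < w p := by
  constructor
  · rintro ⟨hw, h321⟩
    exact ⟨hw.strictMonoOn_compl_descentPositions h321 hn h0,
      hw.strictMonoOn_descentPositions h321, fun p hp => hw.lt_of_mod_two_eq_one hp.1 rfl⟩
  · rintro ⟨hcompl, hmono, hdescent⟩
    exact ⟨upDown_of_strictMonoOn hcompl hdescent, occ321_eq_empty_of_strictMonoOn hmono hcompl⟩

theorem finRotate_symm_lt_finRotate_symm_iff {u v : Fin n} :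
    (finRotate n).symm u < (finRotate n).symm v ↔
      0 < (u : ℕ) ∧ ((v : ℕ) = 0 ∨ u < v) := by
  have coe_symm (u : Fin n) :
      ((finRotate n).symm u : ℕ) = if (u : ℕ) = 0 then n - 1 else u - 1 := by
    obtain ⟨m, rfl⟩ : ∃ m, n = m + 1 := Nat.exists_eq_succ_of_ne_zero u.pos.ne'
    rw [finRotate_symm_apply, Fin.coe_sub_one]
    simp only [Fin.ext_iff, Fin.val_zero, Nat.add_sub_cancel]
  have := u.isLt
  have := v.isLt
  rw [Fin.lt_def, Fin.lt_def, coe_symm, coe_symm]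
  split_ifs <;> omega

end Permutation

section Tableau

variable {l : ℕ}

/-- The position of the permutation read at each cell of the two-row tableau. The first row reads
positions `2, 4, …, 2 * l - 2, 2 * l - 1` and the second reads `1, 3, …, 2 * l - 3, 0`. -/
def cellPosition : Fin l ⊕ Fin l → Fin (2 * l)
  | Sum.inl i => ⟨min (2 * i + 2) (2 * l - 1), by omega⟩
  | Sum.inr i => ⟨if (i : ℕ) + 1 < l then 2 * i + 1 else 0, by split_ifs <;> omega⟩

theorem cellPosition_bijective : Function.Bijective (cellPosition (l := l)) := by
  rw [Fintype.bijective_iff_injective_and_card]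
  refine ⟨?_, by simp [two_mul]⟩
  rintro (i | i) (j | j) h <;>
    simp only [cellPosition, Sum.inl.injEq, Sum.inr.injEq, reduceCtorEq, Fin.ext_iff] at h ⊢ <;>
    grind

theorem cellPosition_inl_pos (i : Fin l) : 0 < (cellPosition (Sum.inl i) : ℕ) := by
  simp only [cellPosition]
  omega

theorem cellPosition_inl_mem_compl_descentPositions (i : Fin l) :
    cellPosition (Sum.inl i) ∈ (descentPositions (2 * l))ᶜ := by
  simp only [cellPosition, descentPositions, Set.mem_compl_iff, Set.mem_ofPred_eq]
  omega

theorem strictMono_cellPosition_inl : StrictMono (cellPosition (l := l) ∘ Sum.inl) := by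
  intro i j hij
  simp only [Function.comp_apply, cellPosition, Fin.lt_def]
  omega

theorem exists_cellPosition_inl_eq {p : Fin (2 * l)} (hp : p ∈ (descentPositions (2 * l))ᶜ)
    (hp_pos : 0 < (p : ℕ)) : ∃ i, cellPosition (Sum.inl i) = p := by
  simp only [descentPositions, Set.mem_compl_iff, Set.mem_ofPred_eq] at hp
  refine ⟨⟨(p - 1) / 2, by omega⟩, Fin.ext ?_⟩
  simp only [cellPosition]
  omega

theorem mem_descentPositions_iff {p : Fin (2 * l)} :
    p ∈ descentPositions (2 * l) ↔ ∃ i : Fin l, (i : ℕ) + 1 < l ∧ cellPosition (Sum.inr i) = p := by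
  constructor
  · rintro ⟨hp_odd, hp_succ⟩
    have hp_half : (p : ℕ) / 2 + 1 < l := by omega
    refine ⟨⟨p / 2, by omega⟩, hp_half, Fin.ext ?_⟩
    simp only [cellPosition, hp_half, if_true]
    omega
  · rintro ⟨i, hi, rfl⟩
    simp only [cellPosition, hi, if_true, descentPositions, Set.mem_ofPred_eq]
    omega

/-- The correspondence between words and fillings of two rows of `l` cells: the entry of a cell is
the letter at its position, lowered by one cyclically, so that a letter `0` at position `0` becomes
the entry `2 * l - 1` of the last cell of the second row. -/
noncomputable def tableauEquiv (l : ℕ) :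
    Equiv.Perm (Fin (2 * l)) ≃ (Fin l ⊕ Fin l ≃ Fin (2 * l)) :=
  (Equiv.ofBijective cellPosition cellPosition_bijective).symm.equivCongr (finRotate (2 * l)).symm

theorem tableauEquiv_apply_lt_iff {w : Equiv.Perm (Fin (2 * l))} {c d : Fin l ⊕ Fin l} :
    tableauEquiv l w c < tableauEquiv l w d ↔
      0 < (w (cellPosition c) : ℕ) ∧
        ((w (cellPosition d) : ℕ) = 0 ∨ w (cellPosition c) < w (cellPosition d)) :=
  finRotate_symm_lt_finRotate_symm_iff

theorem apply_zero_of_isStandard_tableauEquiv {w : Equiv.Perm (Fin (2 * l))} (hl : 0 < 2 * l)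
    (hT : IsStandard (tableauEquiv l w)) : w ⟨0, hl⟩ = ⟨0, hl⟩ := by
  have hl' : 0 < l := Nat.pos_of_mul_pos_left hl
  obtain ⟨c, hc⟩ := (w.bijective.comp cellPosition_bijective).surjective ⟨0, hl⟩
  have hlast : cellPosition (Sum.inr ⟨l - 1, Nat.sub_one_lt_of_lt hl'⟩) = ⟨0, hl⟩ := by
    simp [cellPosition, Nat.sub_add_cancel hl']
  have hle := hT.le_inr_last hl' c
  rw [← not_lt, tableauEquiv_apply_lt_iff, hlast] at hle
  refine Fin.ext (Nat.eq_zero_of_not_pos fun hpos => hle ⟨hpos, Or.inl ?_⟩)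
  exact congrArg Fin.val hc

section ApplyZero

variable {w : Equiv.Perm (Fin (2 * l))} {hl : 0 < 2 * l}

theorem tableauEquiv_lt_iff_of_apply_zero (h0 : w ⟨0, hl⟩ = ⟨0, hl⟩) {c d : Fin l ⊕ Fin l} :
    tableauEquiv l w c < tableauEquiv l w d ↔
      0 < (cellPosition c : ℕ) ∧
        ((cellPosition d : ℕ) = 0 ∨ w (cellPosition c) < w (cellPosition d)) := by
  rw [tableauEquiv_apply_lt_iff, Nat.pos_iff_ne_zero, Nat.pos_iff_ne_zero, Ne,
    coe_apply_eq_zero_iff h0, coe_apply_eq_zero_iff h0]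

theorem strictMono_tableauEquiv_inl_iff (h0 : w ⟨0, hl⟩ = ⟨0, hl⟩) :
    StrictMono (tableauEquiv l w ∘ Sum.inl) ↔ StrictMonoOn w (descentPositions (2 * l))ᶜ := by
  have lt_iff (i j : Fin l) : tableauEquiv l w (Sum.inl i) < tableauEquiv l w (Sum.inl j) ↔
      w (cellPosition (Sum.inl i)) < w (cellPosition (Sum.inl j)) := by
    simp only [tableauEquiv_lt_iff_of_apply_zero h0, cellPosition_inl_pos,
      (cellPosition_inl_pos j).ne', true_and, false_or]
  constructor
  · intro h p hp q hq hpq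
    obtain hp_zero | hp_pos := Nat.eq_zero_or_pos (p : ℕ)
    · exact apply_lt_apply_of_coe_eq_zero h0 hp_zero hpq
    · obtain ⟨i, rfl⟩ := exists_cellPosition_inl_eq hp hp_pos
      obtain ⟨j, rfl⟩ := exists_cellPosition_inl_eq hq (hp_pos.trans hpq)
      exact (lt_iff i j).1 (h (strictMono_cellPosition_inl.lt_iff_lt.1 hpq))
  · intro h i j hij
    exact (lt_iff i j).2 (h (cellPosition_inl_mem_compl_descentPositions i)
      (cellPosition_inl_mem_compl_descentPositions j) (strictMono_cellPosition_inl hij))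

theorem strictMono_tableauEquiv_inr_iff (h0 : w ⟨0, hl⟩ = ⟨0, hl⟩) :
    StrictMono (tableauEquiv l w ∘ Sum.inr) ↔ StrictMonoOn w (descentPositions (2 * l)) := by
  constructor
  · intro h p hp q hq hpq
    obtain ⟨i, hi, rfl⟩ := mem_descentPositions_iff.1 hp
    obtain ⟨j, hj, rfl⟩ := mem_descentPositions_iff.1 hq
    have hij : i < j := by
      simp only [cellPosition, hi, hj, if_true, Fin.lt_def] at hpq
      omega
    have hj_pos : (cellPosition (Sum.inr j) : ℕ) ≠ 0 := by simp [cellPosition, hj]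
    exact ((tableauEquiv_lt_iff_of_apply_zero h0).1 (h hij)).2.resolve_left hj_pos
  · intro h i j hij
    have hi : (i : ℕ) + 1 < l := by omega
    have hi_mem := mem_descentPositions_iff.2 ⟨i, hi, rfl⟩
    refine (tableauEquiv_lt_iff_of_apply_zero h0).2 ⟨by simp [cellPosition, hi], ?_⟩
    by_cases hj : (j : ℕ) + 1 < l
    · refine Or.inr (h hi_mem (mem_descentPositions_iff.2 ⟨j, hj, rfl⟩) ?_)
      simp only [cellPosition, hi, hj, if_true, Fin.lt_def]
      omega
    · exact Or.inl (by simp [cellPosition, hj])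

theorem forall_tableauEquiv_inl_lt_inr_iff (h0 : w ⟨0, hl⟩ = ⟨0, hl⟩) :
    (∀ i, tableauEquiv l w (Sum.inl i) < tableauEquiv l w (Sum.inr i)) ↔
      ∀ p (hp : p ∈ descentPositions (2 * l)), w ⟨p + 1, hp.2⟩ < w p := by
  have succ_eq {i : Fin l} (h : (cellPosition (Sum.inr i) : ℕ) + 1 < 2 * l) (hi : (i : ℕ) + 1 < l) :
      ⟨cellPosition (Sum.inr i) + 1, h⟩ = cellPosition (Sum.inl i) := by
    simp only [cellPosition, hi, if_true, Fin.ext_iff]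
    omega
  simp only [tableauEquiv_lt_iff_of_apply_zero h0, cellPosition_inl_pos, true_and]
  constructor
  · intro h p hp
    obtain ⟨i, hi, rfl⟩ := mem_descentPositions_iff.1 hp
    rw [succ_eq hp.2 hi]
    exact (h i).resolve_left (by simp [cellPosition, hi])
  · intro h i
    by_cases hi : (i : ℕ) + 1 < l
    · have hi_mem := mem_descentPositions_iff.2 ⟨i, hi, rfl⟩
      exact Or.inr (succ_eq hi_mem.2 hi ▸ h _ hi_mem)
    · exact Or.inl (by simp [cellPosition, hi])

end ApplyZero

theorem isStandard_tableauEquiv_iff {w : Equiv.Perm (Fin (2 * l))} (hl : 0 < 2 * l) :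
    IsStandard (tableauEquiv l w) ↔ UpDown w ∧ occ321 w = ∅ ∧ w ⟨0, hl⟩ = ⟨0, hl⟩ := by
  rw [← and_assoc, ← and_iff_left_of_imp (apply_zero_of_isStandard_tableauEquiv hl)]
  refine and_congr_left fun h0 => ?_
  rw [upDown_and_occ321_eq_empty_iff hl h0, ← strictMono_tableauEquiv_inl_iff h0,
    ← strictMono_tableauEquiv_inr_iff h0, ← forall_tableauEquiv_inl_lt_inr_iff h0]
  exact ⟨fun h => ⟨h.1, h.2, h.3⟩, fun h => ⟨h.1, h.2.1, h.2.2⟩⟩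

end Tableau

theorem stmt9 (l : ℕ) (hl : 2 ≤ l) :
    Nat.card {w : Equiv.Perm (Fin (2 * l)) // UpDown w ∧ occ321 w = ∅ ∧
        w ⟨0, by omega⟩ = ⟨0, by omega⟩} = catalan l := by
  calc
    _ = Nat.card {T : Fin l ⊕ Fin l ≃ Fin (2 * l) // IsStandard T} :=
      Nat.card_congr ((tableauEquiv l).subtypeEquiv fun _ =>
        (isStandard_tableauEquiv_iff (by omega)).symm)
    _ = catalan l := card_isStandard l
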